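/- arXiv:2401.03613 — 4 statements merged into one kernel-verified Lean document; each statement's English description precedes it below -/
import Mathlib

section
/- Let β, p, λ, c_a, c_f be positive reals with 8·λ·c_f > β·p·c_a. Set F = β·p/(2λ) and G = 4·c_f/c_a, and define C^E = c_a·λ·( √(1 + 2·β·p·c_f/(λ·c_a)) − 1 ) and C^B = √(2·λ·β·p·c_a·c_f) − (1/2)·β·p·c_a. Then C^B > 0 and (C^E − C^B)/C^B = ( √(1+G·F) − 1 )/( √(G·F) − F ) − 1. -/
/-! In units of `c_a λ`, both costs depend only on the normalized ratios `F` and `G`: the pull cost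
is `√(1 + G F) - 1` and the push cost is `√(G F) - F`. The common unit cancels in the relative cost
reduction, and the push cost is positive exactly when `F < G`. -/

/-- The optimal long-run average cost `C^B` of push-based caching, in its closed form. -/
noncomputable def pushCost (β p lam ca cf : ℝ) : ℝ :=
  √(2 * lam * β * p * ca * cf) - (1/2) * β * p * ca

/-- The optimal long-run average cost `C^E` of pull-based caching, in its closed form. -/
noncomputable def pullCost (β p lam ca cf : ℝ) : ℝ :=
  ca * lam * (√(1 + 2 * β * p * cf / (lam * ca)) - 1)

/-- The normalized demand-to-update ratio `F` of an item. -/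
noncomputable def demandUpdateRatio (β p lam : ℝ) : ℝ := β * p / (2 * lam)

/-- The normalized fetch-to-age cost ratio `G` of an item. -/
noncomputable def fetchAgeRatio (ca cf : ℝ) : ℝ := 4 * cf / ca

theorem lt_sqrt_mul_self_iff {x y : ℝ} (hx : 0 < x) : x < √(y * x) ↔ x < y := by
  rw [Real.lt_sqrt hx.le, sq, mul_lt_mul_iff_left₀ hx]

section Costs

variable {β p lam ca cf : ℝ}

theorem fetchAgeRatio_mul_demandUpdateRatio :
    fetchAgeRatio ca cf * demandUpdateRatio β p lam = 2 * β * p * cf / (lam * ca) := by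
  unfold fetchAgeRatio demandUpdateRatio
  ring

theorem demandUpdateRatio_lt_fetchAgeRatio_iff (hlam : 0 < lam) (hca : 0 < ca) :
    demandUpdateRatio β p lam < fetchAgeRatio ca cf ↔ β * p * ca < 8 * lam * cf := by
  unfold demandUpdateRatio fetchAgeRatio
  rw [div_lt_div_iff₀ (by positivity) hca,
    show 4 * cf * (2 * lam) = 8 * lam * cf by ring]

theorem pullCost_eq_mul_ratios :
    pullCost β p lam ca cf =
      ca * lam * (√(1 + fetchAgeRatio ca cf * demandUpdateRatio β p lam) - 1) := by
  rw [pullCost, fetchAgeRatio_mul_demandUpdateRatio]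

theorem pushCost_eq_mul_ratios (hlam : 0 < lam) (hca : 0 < ca) :
    pushCost β p lam ca cf =
      ca * lam * (√(fetchAgeRatio ca cf * demandUpdateRatio β p lam) -
        demandUpdateRatio β p lam) := by
  have radicand_eq : 2 * lam * β * p * ca * cf =
      (ca * lam) ^ 2 * (fetchAgeRatio ca cf * demandUpdateRatio β p lam) := by
    rw [fetchAgeRatio_mul_demandUpdateRatio]
    field_simp
  have linear_term_eq : (1/2) * β * p * ca = ca * lam * demandUpdateRatio β p lam := by
    unfold demandUpdateRatio
    field_simp
  rw [pushCost, radicand_eq, linear_term_eq, Real.sqrt_mul (by positivity),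
    Real.sqrt_sq (by positivity), mul_sub]

theorem pushCost_pos_iff (hβp : 0 < β * p) (hlam : 0 < lam) (hca : 0 < ca) :
    0 < pushCost β p lam ca cf ↔ β * p * ca < 8 * lam * cf := by
  have hF : 0 < demandUpdateRatio β p lam := div_pos hβp (by positivity)
  rw [pushCost_eq_mul_ratios hlam hca, mul_pos_iff_of_pos_left (mul_pos hca hlam), sub_pos,
    lt_sqrt_mul_self_iff hF, demandUpdateRatio_lt_fetchAgeRatio_iff hlam hca]

theorem pullCost_div_pushCost (hlam : 0 < lam) (hca : 0 < ca) :
    pullCost β p lam ca cf / pushCost β p lam ca cf =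
      (√(1 + fetchAgeRatio ca cf * demandUpdateRatio β p lam) - 1) /
        (√(fetchAgeRatio ca cf * demandUpdateRatio β p lam) - demandUpdateRatio β p lam) := by
  rw [pullCost_eq_mul_ratios, pushCost_eq_mul_ratios hlam hca,
    mul_div_mul_left _ _ (mul_pos hca hlam).ne']

end Costs

theorem push_pull_relative_cost_reduction
    (β p lam ca cf : ℝ) (hβ : 0 < β) (hp : 0 < p) (hlam : 0 < lam)
    (hca : 0 < ca) (hcf : 0 < cf) (h : 8 * lam * cf > β * p * ca) :
    let F : ℝ := β * p / (2 * lam)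
    let G : ℝ := 4 * cf / ca
    let CE : ℝ := ca * lam * (Real.sqrt (1 + 2 * β * p * cf / (lam * ca)) - 1)
    let CB : ℝ := Real.sqrt (2 * lam * β * p * ca * cf) - (1/2) * β * p * ca
    0 < CB ∧
      (CE - CB) / CB = (Real.sqrt (1 + G * F) - 1) / (Real.sqrt (G * F) - F) - 1 := by
  intro F G CE CB
  have hCB : 0 < CB := (pushCost_pos_iff (mul_pos hβ hp) hlam hca).mpr h
  have hratio : CE / CB = (√(1 + G * F) - 1) / (√(G * F) - F) := pullCost_div_pushCost hlam hca
  exact ⟨hCB, by rw [← div_sub_one hCB.ne', hratio]⟩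
end

section
/- Let w, c_f > 0 and q ∈ [0,1), and define v₀(Δ) = 0 and v_m(Δ) = min( w·Δ + q·v_{m−1}(Δ+1), c_f + q·v_{m−1}(1) ) for m ≥ 1, Δ ∈ ℕ. Then for every m ≥ 1 and every Δ ∈ ℕ with w·Δ > c_f, the update branch attains the minimum: c_f + q·v_{m−1}(1) ≤ w·Δ + q·v_{m−1}(Δ+1). In particular, the age thresholds of the finite-horizon optimal push policies are uniformly bounded by c_f/w. -/
/-- Value-iteration iterates for the discounted push-based caching problem:
`pushValue w cf q m Δ` is the `m`-step value at age `Δ`, where `w = β·p·c_a` is the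
per-step expected aging cost rate, `cf` the fetching cost and `q` the discount factor. -/
noncomputable def pushValue (w cf q : ℝ) : ℕ → ℕ → ℝ
  | 0, _ => 0
  | m + 1, Δ =>
      min (w * (Δ : ℝ) + q * pushValue w cf q m (Δ + 1))
          (cf + q * pushValue w cf q m 1)

theorem pushValue_monotone {w q : ℝ} (cf : ℝ) (hw : 0 ≤ w) (hq : 0 ≤ q) (m : ℕ) :
    Monotone (pushValue w cf q m) := by
  induction m with
  | zero => exact monotone_const
  | succ m ih =>
    have aging_mono : Monotone fun Δ : ℕ ↦ w * (Δ : ℝ) := Nat.mono_cast.const_mul hw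
    have continuation_mono : Monotone fun Δ : ℕ ↦ q * pushValue w cf q m (Δ + 1) :=
      (ih.comp Order.succ_mono).const_mul hq
    exact (aging_mono.add continuation_mono).min monotone_const

theorem pushValue_update_optimal_above_bound_general {w cf q : ℝ} (hw : 0 ≤ w) (hq : 0 ≤ q)
    (m : ℕ) {Δ : ℕ} (hΔ : cf ≤ w * (Δ : ℝ)) :
    cf + q * pushValue w cf q m 1 ≤ w * (Δ : ℝ) + q * pushValue w cf q m (Δ + 1) := by
  have fresh_le_aged : pushValue w cf q m 1 ≤ pushValue w cf q m (Δ + 1) :=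
    pushValue_monotone cf hw hq m (Nat.le_add_left 1 Δ)
  exact add_le_add hΔ (mul_le_mul_of_nonneg_left fresh_le_aged hq)

/-- Whenever `w·Δ > c_f`, the update branch attains the minimum in the value
iteration; hence the finite-horizon age thresholds are uniformly bounded by `c_f/w`. -/
theorem pushValue_update_optimal_above_bound (w cf q : ℝ) (hw : 0 < w) (hcf : 0 < cf)
    (hq0 : 0 ≤ q) (hq1 : q < 1) :
    ∀ m : ℕ, 1 ≤ m → ∀ Δ : ℕ, cf < w * (Δ : ℝ) →
      cf + q * pushValue w cf q (m - 1) 1 ≤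
        w * (Δ : ℝ) + q * pushValue w cf q (m - 1) (Δ + 1) := by
  intro m _ Δ hΔ
  exact pushValue_update_optimal_above_bound_general hw.le hq0 (m - 1) hΔ.le
end

section
/- Let λ, c_a, c_f > 0 and γ ∈ [0,1), and define v₀(s) = 0 and v_m(s) = min( λ·c_a·s + γ·v_{m−1}(s+1), c_f + γ·v_{m−1}(1) ) for m ≥ 1, s ≥ 0. Then for every m ≥ 1 the set { s ∈ [0,∞) : c_f + γ·v_{m−1}(1) < λ·c_a·s + γ·v_{m−1}(s+1) } is upward closed in [0,∞); equivalently, there exists a threshold τ_m ∈ [0,∞] such that the fetch action strictly attains the minimum in v_m(s) exactly when s > τ_m. -/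
/-- Value-iteration iterates for the discounted pull-based caching problem restricted to
request epochs: `pullValue lam ca cf γ m s` is the `m`-step value when the elapsed time
since the last cache update is `s`, with update rate `lam`, aging cost `ca`, fetching
cost `cf` and discount factor `γ`. -/
noncomputable def pullValue (lam ca cf γ : ℝ) : ℕ → ℝ → ℝ
  | 0, _ => 0
  | m + 1, s =>
      min (lam * ca * s + γ * pullValue lam ca cf γ m (s + 1))
          (cf + γ * pullValue lam ca cf γ m 1)

/-- The cost of serving a request from the cache at elapsed time `s` when the continuation value
is `v`: the first branch of the value iteration, as an operator on functions of the elapsed time. -/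
noncomputable def serveCost (lam ca γ : ℝ) (v : ℝ → ℝ) (s : ℝ) : ℝ :=
  lam * ca * s + γ * v (s + 1)

section

variable {lam ca γ : ℝ}

theorem serveCost_monotone (hage : 0 ≤ lam * ca) (hγ : 0 ≤ γ) {v : ℝ → ℝ} (hv : Monotone v) :
    Monotone (serveCost lam ca γ v) :=
  have hage_cost : Monotone fun s : ℝ ↦ lam * ca * s := monotone_id.const_mul hage
  have hfuture_cost : Monotone fun s : ℝ ↦ γ * v (s + 1) :=
    (hv.comp (monotone_id.add_const 1)).const_mul hγ
  hage_cost.add hfuture_cost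

theorem pullValue_succ (lam ca cf γ : ℝ) (m : ℕ) :
    pullValue lam ca cf γ (m + 1) = fun s ↦
      min (serveCost lam ca γ (pullValue lam ca cf γ m) s) (cf + γ * pullValue lam ca cf γ m 1) :=
  rfl

theorem pullValue_monotone (cf : ℝ) (hage : 0 ≤ lam * ca) (hγ : 0 ≤ γ) (m : ℕ) :
    Monotone (pullValue lam ca cf γ m) := by
  induction m with
  | zero => exact monotone_const
  | succ m ih =>
    rw [pullValue_succ]
    exact (serveCost_monotone hage hγ ih).min monotone_const

theorem pullValue_fetch_set_upward_closed_general (cf : ℝ) (hage : 0 ≤ lam * ca) (hγ : 0 ≤ γ)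
    (m : ℕ) :
    IsUpperSet {s : ℝ | cf + γ * pullValue lam ca cf γ m 1 <
      serveCost lam ca γ (pullValue lam ca cf γ m) s} :=
  (isUpperSet_Ioi _).preimage (serveCost_monotone hage hγ (pullValue_monotone cf hage hγ m))

end

/-- For each horizon `m ≥ 1`, the set of elapsed times at which the fetch action
strictly attains the minimum in the value iteration is upward closed in `[0,∞)`;
equivalently, fetching is strictly optimal exactly above a threshold `τ_m ∈ [0,∞]`. -/
theorem pullValue_fetch_set_upward_closed (lam ca cf γ : ℝ) (hlam : 0 < lam)
    (hca : 0 < ca) (hcf : 0 < cf) (hγ0 : 0 ≤ γ) (hγ1 : γ < 1) :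
    ∀ m : ℕ, 1 ≤ m → ∀ s s' : ℝ, 0 ≤ s → s ≤ s' →
      cf + γ * pullValue lam ca cf γ (m - 1) 1 <
          lam * ca * s + γ * pullValue lam ca cf γ (m - 1) (s + 1) →
        cf + γ * pullValue lam ca cf γ (m - 1) 1 <
          lam * ca * s' + γ * pullValue lam ca cf γ (m - 1) (s' + 1) := by
  intro m _ s s' _ hss'
  exact pullValue_fetch_set_upward_closed_general cf (by positivity) hγ0 (m - 1) hss'
end

section
/- Let λ, c_a, c_f > 0 and γ ∈ [0,1), and define v₀(s) = 0 and v_m(s) = min( λ·c_a·s + γ·v_{m−1}(s+1), c_f + γ·v_{m−1}(1) ) for m ≥ 1, s ≥ 0. Then for every m ≥ 1 and every s > c_f/(λ·c_a), the fetch branch attains the minimum: c_f + γ·v_{m−1}(1) ≤ λ·c_a·s + γ·v_{m−1}(s+1). In particular, the elapsed-time thresholds τ_m of the finite-horizon optimal pull policies satisfy τ_m ≤ c_f/(λ·c_a) for all m. -/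
section

variable {lam ca cf γ : ℝ}

theorem monotone_pullValue (hrate : 0 ≤ lam * ca) (hγ : 0 ≤ γ) (m : ℕ) :
    Monotone (pullValue lam ca cf γ m) := by
  induction m with
  | zero => exact monotone_const
  | succ m ih =>
    have aging_mono : Monotone fun s : ℝ => lam * ca * s := monotone_id.const_mul hrate
    have future_mono : Monotone fun s : ℝ => γ * pullValue lam ca cf γ m (s + 1) :=
      (ih.comp (monotone_id.add_const 1)).const_mul hγ
    exact (aging_mono.add future_mono).min monotone_const

theorem pullValue_fetch_optimal_above_bound_general (hrate : 0 ≤ lam * ca) (hγ : 0 ≤ γ)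
    (m : ℕ) {s : ℝ} (hs : 0 ≤ s) (hage : cf ≤ lam * ca * s) :
    cf + γ * pullValue lam ca cf γ m 1 ≤
      lam * ca * s + γ * pullValue lam ca cf γ m (s + 1) := by
  have future_le : pullValue lam ca cf γ m 1 ≤ pullValue lam ca cf γ m (s + 1) :=
    monotone_pullValue hrate hγ m (le_add_of_nonneg_left hs)
  gcongr

end

/-- For every `s > c_f/(λ·c_a)`, the fetch branch attains the minimum in the value
iteration; hence the finite-horizon elapsed-time thresholds satisfy
`τ_m ≤ c_f/(λ·c_a)` for all `m`. -/
theorem pullValue_fetch_optimal_above_bound (lam ca cf γ : ℝ) (hlam : 0 < lam)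
    (hca : 0 < ca) (hcf : 0 < cf) (hγ0 : 0 ≤ γ) (hγ1 : γ < 1) :
    ∀ m : ℕ, 1 ≤ m → ∀ s : ℝ, cf / (lam * ca) < s →
      cf + γ * pullValue lam ca cf γ (m - 1) 1 ≤
        lam * ca * s + γ * pullValue lam ca cf γ (m - 1) (s + 1) := by
  intro m _ s hs
  have hrate : 0 < lam * ca := mul_pos hlam hca
  exact pullValue_fetch_optimal_above_bound_general hrate.le hγ0 (m - 1)
    ((div_pos hcf hrate).trans hs).le ((div_lt_iff₀' hrate).mp hs).le
end
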